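/- Let w be an element of the commutator subgroup [F₂,F₂] of the free group F₂ on two generators, and let g ∈ SL(2,ℂ) with tr(g) ≠ 2 and tr(g) ≠ −2. Then for all x₀, y₀ ∈ SL(2,ℂ) with tr(w(x₀,y₀)) = tr(g), there exist x, y ∈ SL(2,ℂ) such that w(x,y) = g, tr x = tr x₀, tr y = tr y₀, and tr(xy) = tr(x₀y₀). (In other words, the trace map sends the solution variety S_{w,g} onto the trace surface H_{w,tr(g)}.) -/

import Mathlib

/-!
Two noncentral elements of `SL(2, K)` with the same trace `t` are conjugate when `K` is
algebraically closed: if `A` is not scalar, some `v` makes `(v, A v)` a basis, in which `A` becomes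
the companion matrix of `X² - t X + 1`, and rescaling `v` by `c` multiplies `det (v | A v)` by `c²`,
so that the change of basis can be chosen in `SL(2, K)`. Conjugating the whole representation by an
element carrying `w(x₀, y₀)` to `g` changes no trace.
-/

open Matrix

abbrev SL2C := Matrix.SpecialLinearGroup (Fin 2) ℂ

noncomputable def tr2 (x : SL2C) : ℂ := Matrix.trace (x : Matrix (Fin 2) (Fin 2) ℂ)

/-- The evaluation of a word `w` in the free group on two generators at a pair
of matrices `x y ∈ SL(2,ℂ)`. -/
noncomputable def wordEval (w : FreeGroup (Fin 2)) (x y : SL2C) : SL2C :=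
  FreeGroup.lift ![x, y] w

open scoped MatrixGroups

section CommRing

variable {R : Type*} [CommRing R]

/-- The companion matrix of the polynomial `X² - t X + d`, with trace `t` and determinant `d`. It
serves as the normal form of the nonscalar `2 × 2` matrices with that characteristic polynomial. -/
def companionMatrix (t d : R) : Matrix (Fin 2) (Fin 2) R :=
  !![0, -d; 1, t]

theorem det_companionMatrix (t d : R) : (companionMatrix t d).det = d := by
  simp [companionMatrix, det_fin_two]

/-- The Krylov matrix of a `2 × 2` matrix `A` and a vector `v`, with columns `v` and `A v`. It is
the change of basis which brings `A` to companion form when `v` is a cyclic vector. -/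
def krylovMatrix (A : Matrix (Fin 2) (Fin 2) R) (v : Fin 2 → R) : Matrix (Fin 2) (Fin 2) R :=
  (of ![v, A *ᵥ v])ᵀ

theorem det_krylovMatrix (A : Matrix (Fin 2) (Fin 2) R) (v : Fin 2 → R) :
    (krylovMatrix A v).det =
      A 1 0 * v 0 ^ 2 + (A 1 1 - A 0 0) * v 0 * v 1 - A 0 1 * v 1 ^ 2 := by
  simp only [krylovMatrix, det_transpose, det_fin_two, of_apply, cons_val_zero, cons_val_one,
    mulVec, vec2_dotProduct]
  ring

theorem det_krylovMatrix_smul (A : Matrix (Fin 2) (Fin 2) R) (c : R) (v : Fin 2 → R) :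
    (krylovMatrix A (c • v)).det = c ^ 2 * (krylovMatrix A v).det := by
  simp only [det_krylovMatrix, Pi.smul_apply, smul_eq_mul]
  ring

theorem mul_krylovMatrix (A : Matrix (Fin 2) (Fin 2) R) (v : Fin 2 → R) :
    A * krylovMatrix A v = krylovMatrix A v * companionMatrix A.trace A.det := by
  simp only [krylovMatrix, companionMatrix, ← ext_iff, Fin.forall_fin_two, mul_apply,
    Fin.sum_univ_two, transpose_apply, of_apply, cons_val_zero, cons_val_one, cons_val_fin_one,
    mulVec, vec2_dotProduct, trace_fin_two, det_fin_two]
  refine ⟨⟨?_, ?_⟩, ?_, ?_⟩ <;> ring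

theorem exists_det_krylovMatrix_ne_zero {A : Matrix (Fin 2) (Fin 2) R}
    (hA : A ∉ Set.range (scalar (Fin 2))) : ∃ v, (krylovMatrix A v).det ≠ 0 := by
  by_contra! hdet
  have h₁₀ : A 1 0 = 0 := by simpa [det_krylovMatrix] using hdet ![1, 0]
  have h₀₁ : A 0 1 = 0 := by simpa [det_krylovMatrix] using hdet ![0, 1]
  have h₁₁ : A 1 1 = A 0 0 := by
    simpa [det_krylovMatrix, h₁₀, h₀₁, sub_eq_zero] using hdet ![1, 1]
  refine hA ⟨A 0 0, ?_⟩
  ext i j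
  fin_cases i <;> fin_cases j <;> simp [h₁₀, h₀₁, h₁₁]

theorem notMem_range_scalar_of_notMem_center {n : Type*} [Fintype n] [DecidableEq n]
    {A : SpecialLinearGroup n R} (hA : A ∉ Subgroup.center (SpecialLinearGroup n R)) :
    (A : Matrix n n R) ∉ Set.range (scalar n) := by
  rintro ⟨r, hr⟩
  refine hA (Matrix.SpecialLinearGroup.mem_center_iff.mpr ⟨r, ?_, hr⟩)
  simpa [← hr] using A.det_coe

theorem trace_eq_two_or_neg_two_of_mem_center [NoZeroDivisors R] {A : SL(2, R)}
    (hA : A ∈ Subgroup.center SL(2, R)) :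
    (A : Matrix (Fin 2) (Fin 2) R).trace = 2 ∨ (A : Matrix (Fin 2) (Fin 2) R).trace = -2 := by
  obtain ⟨r, hr, hrA⟩ := Matrix.SpecialLinearGroup.mem_center_iff.mp hA
  rw [Fintype.card_fin, sq_eq_one_iff] at hr
  rw [← hrA]
  rcases hr with rfl | rfl <;> norm_num [trace_fin_two]

theorem trace_eq_of_isConj {n : Type*} [Fintype n] [DecidableEq n] {A B : SpecialLinearGroup n R}
    (h : IsConj A B) : (A : Matrix n n R).trace = (B : Matrix n n R).trace := by
  obtain ⟨P, rfl⟩ := isConj_iff.mp h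
  rw [Matrix.SpecialLinearGroup.coe_mul, trace_mul_comm,
    ← Matrix.SpecialLinearGroup.coe_mul, inv_mul_cancel_left]

end CommRing

section IsAlgClosed

variable {K : Type*} [Field K] [IsAlgClosed K]

theorem exists_det_krylovMatrix_eq_one {A : Matrix (Fin 2) (Fin 2) K}
    (hA : A ∉ Set.range (scalar (Fin 2))) : ∃ v, (krylovMatrix A v).det = 1 := by
  obtain ⟨v, hv⟩ := exists_det_krylovMatrix_ne_zero hA
  obtain ⟨c, hc⟩ := IsAlgClosed.exists_pow_nat_eq (krylovMatrix A v).det⁻¹ two_pos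
  exact ⟨c • v, by rw [det_krylovMatrix_smul, hc, inv_mul_cancel₀ hv]⟩

theorem isConj_companionMatrix_of_notMem_center {A : SL(2, K)}
    (hA : A ∉ Subgroup.center SL(2, K)) :
    IsConj A ⟨companionMatrix (A : Matrix (Fin 2) (Fin 2) K).trace 1, det_companionMatrix _ _⟩ := by
  obtain ⟨v, hv⟩ := exists_det_krylovMatrix_eq_one (notMem_range_scalar_of_notMem_center hA)
  have hmul : krylovMatrix (A : Matrix (Fin 2) (Fin 2) K) v *
        companionMatrix (A : Matrix (Fin 2) (Fin 2) K).trace 1 =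
      A * krylovMatrix A v := by
    rw [mul_krylovMatrix, A.det_coe]
  let P : SL(2, K) := ⟨krylovMatrix A v, hv⟩
  exact (isConj_iff.mpr ⟨P, mul_inv_eq_of_eq_mul (Subtype.ext hmul)⟩).symm

theorem isConj_of_notMem_center_of_trace_eq {A B : SL(2, K)} (hA : A ∉ Subgroup.center SL(2, K))
    (hB : B ∉ Subgroup.center SL(2, K))
    (h : (A : Matrix (Fin 2) (Fin 2) K).trace = (B : Matrix (Fin 2) (Fin 2) K).trace) :
    IsConj A B := by
  have hA' := isConj_companionMatrix_of_notMem_center hA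
  simp only [h] at hA'
  exact hA'.trans (isConj_companionMatrix_of_notMem_center hB).symm

theorem trace_map_onto_trace_surface_general {M : Type*} [Monoid M] (ρ₀ : M →* SL(2, K)) (w : M)
    (hw : ρ₀ w ∉ Subgroup.center SL(2, K)) (g : SL(2, K)) (hg : g ∉ Subgroup.center SL(2, K))
    (h : (ρ₀ w : Matrix (Fin 2) (Fin 2) K).trace = (g : Matrix (Fin 2) (Fin 2) K).trace) :
    ∃ ρ : M →* SL(2, K), ρ w = g ∧ ∀ m,
      (ρ m : Matrix (Fin 2) (Fin 2) K).trace = (ρ₀ m : Matrix (Fin 2) (Fin 2) K).trace := by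
  obtain ⟨P, hP⟩ := isConj_iff.mp (isConj_of_notMem_center_of_trace_eq hw hg h)
  exact ⟨(MulAut.conj P).toMonoidHom.comp ρ₀, hP,
    fun m ↦ (trace_eq_of_isConj (isConj_iff.mpr ⟨P, rfl⟩)).symm⟩

end IsAlgClosed

theorem notMem_center_of_tr2_ne {g : SL2C} (hg : tr2 g ≠ 2) (hg' : tr2 g ≠ -2) :
    g ∉ Subgroup.center SL2C :=
  fun hc ↦ (trace_eq_two_or_neg_two_of_mem_center hc).elim hg hg'

theorem wordEval_apply_of (ρ : FreeGroup (Fin 2) →* SL2C) (w : FreeGroup (Fin 2)) :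
    wordEval w (ρ (.of 0)) (ρ (.of 1)) = ρ w :=
  (FreeGroup.lift_unique ρ fun i ↦ by fin_cases i <;> rfl).symm

/-- for `w ∈ [F₂,F₂]` and `g ∈ SL(2,ℂ)` with `tr g ≠ ±2`, the trace map
sends the solution variety `S_{w,g}` onto the whole trace surface `H_{w, tr g}`. -/
theorem trace_map_onto_trace_surface (w : FreeGroup (Fin 2))
    (hw : w ∈ commutator (FreeGroup (Fin 2)))
    (g : SL2C) (hg : tr2 g ≠ 2) (hg' : tr2 g ≠ -2)
    (x₀ y₀ : SL2C) (h : tr2 (wordEval w x₀ y₀) = tr2 g) :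
    ∃ x y : SL2C, wordEval w x y = g ∧
      tr2 x = tr2 x₀ ∧ tr2 y = tr2 y₀ ∧ tr2 (x * y) = tr2 (x₀ * y₀) := by
  obtain ⟨ρ, hρ, htr⟩ := trace_map_onto_trace_surface_general (FreeGroup.lift ![x₀, y₀]) w
    (notMem_center_of_tr2_ne (h ▸ hg) (h ▸ hg')) g (notMem_center_of_tr2_ne hg hg') h
  exact ⟨ρ (.of 0), ρ (.of 1), (wordEval_apply_of ρ w).trans hρ, by simpa using! htr (.of 0),
    by simpa using! htr (.of 1), by simpa using! htr (.of 0 * .of 1)⟩
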